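/- Let E ⊆ ℝ² be compact, ε > 0, and x ∈ ∂E_ε. Then: (i) if Π_E(x) = {y} is a singleton, then Ξ_x(E_ε) = {ξ ∈ S¹ : ⟨y − x, ξ⟩ ≤ 0}; (ii) if Π_E(x) contains at least two points, then Ξ_x(E_ε) = [ξ₁, ξ₂]_{S¹}, where ξ₁ and ξ₂ are extremal outward directions at x (possibly ξ₁ = ξ₂) and they are the only extremal outward directions at x. -/

import Mathlib

open Metric Set Filter Topology RealInnerProductSpace

noncomputable section

/-- The Euclidean plane. -/
abbrev Plane := EuclideanSpace ℝ (Fin 2)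

/-- The closed ε-neighbourhood of a set `E ⊆ ℝ²`: the closure of the union of open
ε-balls centred at points of `E`. -/
def eNbhd (E : Set Plane) (ε : ℝ) : Set Plane :=
  closure (⋃ y ∈ E, ball y ε)

/-- The set of contributors of a boundary point `x ∈ ∂E_ε`: points `y ∈ ∂E` with
`‖y - x‖ = ε`. -/
def contributors (E : Set Plane) (ε : ℝ) (x : Plane) : Set Plane :=
  {y ∈ frontier E | ‖y - x‖ = ε}

/-- The set of outward directions from `E_ε` at `x`. -/
def outwardDirs (E : Set Plane) (ε : ℝ) (x : Plane) : Set Plane :=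
  {ξ | ‖ξ‖ = 1 ∧ ∃ u : ℕ → Plane, (∀ n, u n ∉ eNbhd E ε) ∧
    Tendsto u atTop (nhds x) ∧
    Tendsto (fun n => (‖u n - x‖)⁻¹ • (u n - x)) atTop (nhds ξ)}

/-- The set of extremal outward directions at `x`: outward directions perpendicular to
`y - x` for some contributor `y`. -/
def extOutward (E : Set Plane) (ε : ℝ) (x : Plane) : Set Plane :=
  {ξ ∈ outwardDirs E ε x | ∃ y ∈ contributors E ε x, ⟪y - x, ξ⟫ = 0}

/-- The set of extremal contributors at `x`: contributors perpendicular to some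
outward direction. -/
def extContrib (E : Set Plane) (ε : ℝ) (x : Plane) : Set Plane :=
  {y ∈ contributors E ε x | ∃ ξ ∈ outwardDirs E ε x, ⟪y - x, ξ⟫ = 0}

/-- The set of extremal pairs at `x`. -/
def extPairs (E : Set Plane) (ε : ℝ) (x : Plane) : Set (Plane × Plane) :=
  {p | p.1 ∈ outwardDirs E ε x ∧ p.2 ∈ contributors E ε x ∧ ⟪p.2 - x, p.1⟫ = 0}

/-- The set `Unp(E)` of boundary points of `E_ε` with a unique contributor. -/
def unp (E : Set Plane) (ε : ℝ) : Set Plane :=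
  {x ∈ frontier (eNbhd E ε) | ∃ y, contributors E ε x = {y}}

/-- A boundary point `x ∈ ∂E_ε` is smooth if `x ∈ Unp(E)` and a whole neighbourhood of
`x` on the boundary consists of points of `Unp(E)`. -/
def IsSmoothPt (E : Set Plane) (ε : ℝ) (x : Plane) : Prop :=
  x ∈ unp E ε ∧ ∃ r > 0, frontier (eNbhd E ε) ∩ ball x r ⊆ unp E ε

/-- A singularity: a non-smooth boundary point of `E_ε`. -/
def IsSingularity (E : Set Plane) (ε : ℝ) (x : Plane) : Prop :=
  x ∈ frontier (eNbhd E ε) ∧ ¬ IsSmoothPt E ε x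

/-- The open half-ball of radius `r` at `x` in direction `v`. -/
def halfBall (x v : Plane) (r : ℝ) : Set Plane :=
  {z ∈ ball x r | 0 < ⟪z - x, v⟫}

/-- `V` is a connected component of the complement of `E_ε`. -/
def IsCompOfCompl (E : Set Plane) (ε : ℝ) (V : Set Plane) : Prop :=
  ∃ z, z ∉ eNbhd E ε ∧ V = connectedComponentIn (eNbhd E ε)ᶜ z

/-- The closed geodesic arc-segment between `v, w ∈ S¹`. -/
def arcSeg (v w : Plane) : Set Plane :=
  {u | ‖u‖ = 1 ∧ ∃ a b : ℝ, 0 ≤ a ∧ 0 ≤ b ∧ u = a • v + b • w}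

/-- The open geodesic arc-segment between `v, w ∈ S¹`. -/
def openArc (v w : Plane) : Set Plane :=
  arcSeg v w \ {v, w}

/-- A chain sequence for `x`: a sequence of singularities converging to `x` whose
extremal contributors become increasingly opposed. -/
def IsChainSeq (E : Set Plane) (ε : ℝ) (x : Plane) (u : ℕ → Plane) : Prop :=
  (∀ n, IsSingularity E ε (u n)) ∧ (∀ n, u n ≠ x) ∧ Tendsto u atTop (nhds x) ∧
  ∃ y1 y2 : ℕ → Plane, (∀ n, extContrib E ε (u n) = {y1 n, y2 n}) ∧
    Tendsto (fun n => ⟪ε⁻¹ • (y1 n - u n), ε⁻¹ • (y2 n - u n)⟫) atTop (nhds (-1))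

/-- Type S1: wedge. -/
def IsWedge (E : Set Plane) (ε : ℝ) (x : Plane) : Prop :=
  IsSingularity E ε x ∧
  ∃ ξ₁ ξ₂, extOutward E ε x = {ξ₁, ξ₂} ∧ ξ₁ ≠ ξ₂ ∧ ξ₁ ≠ -ξ₂

/-- Type S2: one-sided sharp singularity. -/
def IsSharp (E : Set Plane) (ε : ℝ) (x : Plane) : Prop :=
  IsSingularity E ε x ∧ (∃ ξ, extOutward E ε x = {ξ}) ∧
  ∃ δ > 0, IsConnected (ball x δ ∩ (eNbhd E ε)ᶜ)

/-- Type S3: sharp-sharp singularity. -/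
def IsSharpSharp (E : Set Plane) (ε : ℝ) (x : Plane) : Prop :=
  IsSingularity E ε x ∧ ∃ ξ, extOutward E ε x = {ξ, -ξ} ∧
    ∀ η ∈ ({ξ, -ξ} : Set Plane), ∃ δ > 0, IsConnected (halfBall x η δ ∩ (eNbhd E ε)ᶜ)

/-- Type S4: one-sided shallow singularity. -/
def IsShallow (E : Set Plane) (ε : ℝ) (x : Plane) : Prop :=
  IsSingularity E ε x ∧ x ∈ unp E ε ∧
  ∃ ξ₁ ξ₂, extOutward E ε x = {ξ₁, ξ₂} ∧
    (∃ δ > 0, halfBall x ξ₁ δ ∩ frontier (eNbhd E ε) ⊆ unp E ε) ∧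
    (∀ δ > 0, ¬ (halfBall x ξ₂ δ ∩ frontier (eNbhd E ε) ⊆ unp E ε))

/-- Type S5: shallow-shallow singularity. -/
def IsShallowShallow (E : Set Plane) (ε : ℝ) (x : Plane) : Prop :=
  IsSingularity E ε x ∧ x ∈ unp E ε ∧
  ∃ ξ₁ ξ₂, extOutward E ε x = {ξ₁, ξ₂} ∧
    ∀ η ∈ ({ξ₁, ξ₂} : Set Plane), ∀ δ > 0,
      ¬ (halfBall x η δ ∩ frontier (eNbhd E ε) ⊆ unp E ε)

/-- Type S6: one-sided chain singularity. -/
def IsChainSing (E : Set Plane) (ε : ℝ) (x : Plane) : Prop :=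
  IsSingularity E ε x ∧ (∃ ξ, extOutward E ε x = {ξ}) ∧
  ∃ u, IsChainSeq E ε x u

/-- Type S7: chain-chain singularity. -/
def IsChainChain (E : Set Plane) (ε : ℝ) (x : Plane) : Prop :=
  IsSingularity E ε x ∧ ∃ ξ, extOutward E ε x = {ξ, -ξ} ∧
    ∀ η ∈ ({ξ, -ξ} : Set Plane), ∃ δ > 0, ∃ u,
      IsChainSeq E ε x u ∧ ∀ n, u n ∈ halfBall x η δ

/-- Type S8: sharp-chain singularity. -/
def IsSharpChain (E : Set Plane) (ε : ℝ) (x : Plane) : Prop :=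
  IsSingularity E ε x ∧ ∃ ξ, extOutward E ε x = {ξ, -ξ} ∧
    (∃ δ > 0, IsConnected (halfBall x ξ δ ∩ (eNbhd E ε)ᶜ)) ∧
    (∃ δ > 0, ∃ u, IsChainSeq E ε x u ∧ ∀ n, u n ∈ halfBall x (-ξ) δ)

/-! A point outside `E_ε` has distance at least `ε` from every contributor `y` of `x`, so an outward
direction `ξ` makes an angle of at least `π / 2` with every vector `y - x`: the outward directions
lie in the unit section of the polar cone of the contributor vectors.

If some `v` makes an angle greater than `π / 2` with all contributor vectors, then so does `ξ + t v`
for every `ξ` in that polar cone and `t > 0`, and a short open segment from `x` in the direction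
`ξ + t v` avoids `E_ε`; since the outward directions form a closed set, they fill the polar cone.
This settles the case of one contributor. In the case of several, the contributor vectors span a
cone less than a half-plane, and its polar is bounded by the normals to the two extreme rays.

If there is no such `v`, then for outward directions `ξ` and `η` some contributor vector is not at
an angle greater than `π / 2` with `ξ + η`, hence is orthogonal to both `ξ` and `η`. Therefore
`η = ξ` or `η = -ξ`, and every outward direction is extremal.
-/

section UnitPolar

variable {F : Type*} [NormedAddCommGroup F] [InnerProductSpace ℝ F]

/-- The unit sphere section of the polar cone of `C`: the unit vectors at an angle of at least
`π / 2` with every vector of `C`. When `C` consists of the vectors from `x` to its contributors,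
it is the set of directions along which no contributor is approached to first order. -/
def unitPolar (C : Set F) : Set F :=
  {ξ | ‖ξ‖ = 1 ∧ ∀ c ∈ C, ⟪c, ξ⟫ ≤ 0}

lemma inner_normalize_le_half_norm {c d : F} (h : ‖c‖ ≤ ‖c - d‖) :
    ⟪c, NormedSpace.normalize d⟫ ≤ ‖d‖ / 2 := by
  have hcd : 2 * ⟪c, d⟫ ≤ ‖d‖ ^ 2 := by
    have := pow_le_pow_left₀ (norm_nonneg c) h 2
    rw [norm_sub_sq_real] at this
    linarith
  rcases (norm_nonneg d).eq_or_lt with hd | hd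
  · simp [norm_eq_zero.1 hd.symm]
  · rw [NormedSpace.normalize, inner_smul_right, inv_mul_le_iff₀ hd]
    linarith

lemma norm_lt_norm_sub_smul {c v : F} {t : ℝ} (ht : 0 < t) (hcv : ⟪c, v⟫ < 0) :
    ‖c‖ < ‖c - t • v‖ := by
  refine lt_of_pow_lt_pow_left₀ 2 (norm_nonneg _) ?_
  rw [norm_sub_sq_real, inner_smul_right]
  linarith [mul_neg_of_pos_of_neg ht hcv, sq_nonneg ‖t • v‖]

-- The points of `closure E` on the far side of the hyperplane through `x` orthogonal to `v` keep
-- a distance greater than `ε` from a neighbourhood of `x`; from all others the ray moves away.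
lemma eventually_notMem_cthickening [ProperSpace F] {E : Set F} {ε : ℝ} {x v : F} (hε : 0 ≤ ε)
    (hx : ∀ y ∈ closure E, ε ≤ ‖y - x‖)
    (hv : ∀ y ∈ closure E, ‖y - x‖ = ε → ⟪y - x, v⟫ < 0) :
    ∀ᶠ t : ℝ in 𝓝[>] 0, x + t • v ∉ cthickening ε E := by
  set S : Set F := closure E ∩ {y | 0 ≤ ⟪y - x, v⟫}
  have hS : IsClosed S :=
    isClosed_closure.inter (isClosed_le continuous_const (by fun_prop))
  have hxS : x ∉ cthickening ε S := by
    simp only [hS.cthickening_eq_biUnion_closedBall hε, mem_iUnion, mem_closedBall',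
      dist_eq_norm, not_exists]
    rintro y ⟨hyE, hyv⟩ hyx
    exact (hv y hyE (hyx.antisymm (hx y hyE))).not_ge hyv
  have hnear : ∀ᶠ t : ℝ in 𝓝[>] 0, x + t • v ∉ cthickening ε S := by
    have hcont : ContinuousAt (fun t : ℝ => x + t • v) 0 := by fun_prop
    refine nhdsWithin_le_nhds (hcont.eventually (isClosed_cthickening.isOpen_compl.mem_nhds ?_))
    simpa using hxS
  filter_upwards [hnear, self_mem_nhdsWithin] with t htS ht
  simp only [cthickening_eq_biUnion_closedBall E hε, hS.cthickening_eq_biUnion_closedBall hε,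
    mem_iUnion, mem_closedBall', dist_eq_norm, not_exists, not_le] at htS ⊢
  intro y hy
  rcases le_or_gt 0 ⟪y - x, v⟫ with hyv | hyv
  · exact htS y ⟨hy, hyv⟩
  · rw [← sub_sub]
    exact (hx y hy).trans_lt (norm_lt_norm_sub_smul ht hyv)

end UnitPolar

section TwoDim

variable {F : Type*} [NormedAddCommGroup F] [InnerProductSpace ℝ F]
  [Fact (Module.finrank ℝ F = 2)] (o : Orientation ℝ F (Fin 2))

lemma areaForm_smul_eq_inner_smul_sub (p q ξ : F) :
    o.areaForm p q • ξ =
      ⟪q, ξ⟫ • o.rightAngleRotation p - ⟪p, ξ⟫ • o.rightAngleRotation q := by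
  rcases eq_or_ne ξ 0 with rfl | hξ
  · simp
  refine InnerProductSpace.ext_inner_left_basis (o.basisRightAngleRotation ξ hξ)
    (Fin.forall_fin_two.2 ⟨?_, ?_⟩)
  · have h := o.inner_mul_areaForm_sub ξ p q
    simp only [o.coe_basisRightAngleRotation, Matrix.cons_val_zero, inner_sub_right,
      inner_smul_right, o.inner_rightAngleRotation_right, real_inner_self_eq_norm_sq]
    rw [real_inner_comm p ξ, real_inner_comm q ξ] at h
    linarith
  · simp [inner_sub_right, inner_smul_right, real_inner_comm ξ, mul_comm]

lemma eq_or_eq_neg_of_areaForm_eq_zero {a b : F} (hab : ‖a‖ = ‖b‖) (h : o.areaForm a b = 0) :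
    a = b ∨ a = -b := by
  have eq_of_nonneg {c : F} (hc : ‖a‖ = ‖c‖) (h₀ : 0 ≤ ⟪a, c⟫) (h : o.areaForm a c = 0) : a = c :=
    ((o.nonneg_inner_and_areaForm_eq_zero_iff_sameRay a c).1 ⟨h₀, h⟩).eq_of_norm_eq hc
  rcases le_total 0 ⟪a, b⟫ with h₀ | h₀
  · exact .inl (eq_of_nonneg hab h₀ h)
  · exact .inr (eq_of_nonneg (by rwa [norm_neg]) (by simpa using h₀) (by simpa using h))

lemma eq_of_areaForm_eq_zero_of_inner_neg {a b v : F} (hab : ‖a‖ = ‖b‖)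
    (h : o.areaForm a b = 0) (ha : ⟪a, v⟫ < 0) (hb : ⟪b, v⟫ < 0) : a = b := by
  refine (eq_or_eq_neg_of_areaForm_eq_zero o hab h).resolve_right fun hneg => ?_
  rw [hneg, inner_neg_left] at ha
  linarith

-- The slope of `c ∈ C` relative to the axis `v` is continuous on `C`; `p` minimises it.
lemma exists_forall_areaForm_nonneg {C : Set F} {v : F} (hC : IsCompact C) (hne : C.Nonempty)
    (hv : ∀ c ∈ C, ⟪c, v⟫ < 0) : ∃ p ∈ C, ∀ c ∈ C, 0 ≤ o.areaForm p c := by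
  have : FiniteDimensional ℝ F := .of_fact_finrank_eq_two
  have hslope : ContinuousOn (fun c => o.areaForm v c / ⟪c, v⟫) C :=
    (o.areaForm v).continuous_of_finiteDimensional.continuousOn.div (by fun_prop)
      fun c hc => (hv c hc).ne
  obtain ⟨p, hp, hmin⟩ := hC.exists_isMinOn hne hslope
  refine ⟨p, hp, fun c hc => ?_⟩
  have hv₀ : 0 < ‖v‖ ^ 2 := by
    have : v ≠ 0 := fun h => by simpa [h] using hv p hp
    positivity
  refine nonneg_of_mul_nonneg_right (a := ‖v‖ ^ 2) ?_ hv₀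
  have hle : o.areaForm v p / ⟪p, v⟫ ≤ o.areaForm v c / ⟪c, v⟫ := hmin hc
  rw [← neg_div_neg_eq, ← neg_div_neg_eq (o.areaForm v c),
    div_le_div_iff₀ (neg_pos.2 (hv p hp)) (neg_pos.2 (hv c hc))] at hle
  rw [← o.inner_mul_areaForm_sub v p c, real_inner_comm p v, real_inner_comm c v]
  linarith

/-- `p` and `q` are the first and the last vector of `C` in the sense of rotation of `o`: the
bounding rays of the cone spanned by `C`, which is less than a half-plane. -/
structure IsExtremePair (C : Set F) (p q : F) : Prop where
  left_mem : p ∈ C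
  right_mem : q ∈ C
  left_nonneg : ∀ c ∈ C, 0 ≤ o.areaForm p c
  right_nonneg : ∀ c ∈ C, 0 ≤ o.areaForm c q
  pos : 0 < o.areaForm p q

variable {o} in
lemma IsExtremePair.not_areaForm_eq_zero {C : Set F} {p q c : F} (h : IsExtremePair o C p q)
    (hc : c ≠ 0) : ¬(o.areaForm c p = 0 ∧ o.areaForm c q = 0) := by
  rintro ⟨hp, hq⟩
  have hcpq := o.inner_mul_areaForm_sub c p q
  rw [hp, hq, mul_zero, zero_mul, sub_zero] at hcpq
  exact mul_ne_zero (pow_ne_zero 2 (norm_ne_zero_iff.2 hc)) h.pos.ne' hcpq.symm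

lemma exists_isExtremePair {C : Set F} {r : ℝ} {v : F} (hC : IsCompact C) (hC₂ : C.Nontrivial)
    (hr : ∀ c ∈ C, ‖c‖ = r) (hv : ∀ c ∈ C, ⟪c, v⟫ < 0) : ∃ p q, IsExtremePair o C p q := by
  obtain ⟨p, hp, hpC⟩ := exists_forall_areaForm_nonneg o hC hC₂.nonempty hv
  obtain ⟨q, hq, hqC⟩ := exists_forall_areaForm_nonneg (-o) hC hC₂.nonempty hv
  replace hqC : ∀ c ∈ C, 0 ≤ o.areaForm c q := fun c hc => by
    rw [o.areaForm_swap]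
    simpa using hqC c hc
  refine ⟨p, q, hp, hq, hpC, hqC, (hpC q hq).lt_of_ne' fun hpq => ?_⟩
  have eq_of_areaForm {c d : F} (hc : c ∈ C) (hd : d ∈ C) (h : o.areaForm c d = 0) : c = d :=
    eq_of_areaForm_eq_zero_of_inner_neg o ((hr c hc).trans (hr d hd).symm) h (hv c hc) (hv d hd)
  obtain rfl : p = q := eq_of_areaForm hp hq hpq
  obtain ⟨c, hc, hcp⟩ := hC₂.exists_ne p
  refine hcp (eq_of_areaForm hc hp (le_antisymm ?_ (hqC c hc)))
  rw [o.areaForm_swap]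
  exact neg_nonpos.2 (hpC c hc)

lemma eq_or_eq_neg_of_inner_eq_zero {a b c : F} (hc : c ≠ 0) (hab : ‖a‖ = ‖b‖)
    (ha : ⟪c, a⟫ = 0) (hb : ⟪c, b⟫ = 0) : a = b ∨ a = -b := by
  have : FiniteDimensional ℝ F := .of_fact_finrank_eq_two
  let o : Orientation ℝ F (Fin 2) := (Module.finBasisOfFinrankEq ℝ F Fact.out).orientation
  have h := o.inner_mul_areaForm_sub c a b
  rw [ha, hb, zero_mul, mul_zero, sub_zero] at h
  exact eq_or_eq_neg_of_areaForm_eq_zero o hab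
    ((mul_eq_zero.1 h.symm).resolve_left (pow_ne_zero 2 (norm_ne_zero_iff.2 hc)))

end TwoDim

section Arc

open scoped EuclideanSpace

lemma left_mem_arcSeg {v w : Plane} (hv : ‖v‖ = 1) : v ∈ arcSeg v w :=
  ⟨hv, 1, 0, by simp⟩

lemma right_mem_arcSeg {v w : Plane} (hw : ‖w‖ = 1) : w ∈ arcSeg v w :=
  ⟨hw, 0, 1, by simp⟩

lemma arcSeg_smul_smul {s t : ℝ} (hs : 0 < s) (ht : 0 < t) (v w : Plane) :
    arcSeg (s • v) (t • w) = arcSeg v w := by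
  ext u
  refine and_congr_right fun _ => ⟨?_, ?_⟩
  · rintro ⟨a, b, ha, hb, rfl⟩
    exact ⟨a * s, b * t, by positivity, by positivity, by module⟩
  · rintro ⟨a, b, ha, hb, rfl⟩
    refine ⟨a / s, b / t, by positivity, by positivity, ?_⟩
    rw [smul_smul, smul_smul, div_mul_cancel₀ a hs.ne', div_mul_cancel₀ b ht.ne']

lemma arcSeg_eq_pair {v w : Plane} (hv : ‖v‖ = 1) (hw : w = v ∨ w = -v) :
    arcSeg v w = {v, w} := by
  have hw₁ : ‖w‖ = 1 := by rcases hw with rfl | rfl <;> simpa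
  refine Subset.antisymm ?_ (pair_subset (left_mem_arcSeg hv) (right_mem_arcSeg hw₁))
  rintro u ⟨hu, a, b, ha, hb, rfl⟩
  rcases hw with rfl | rfl
  · rw [← add_smul] at hu ⊢
    rw [norm_smul, hv, mul_one, Real.norm_of_nonneg (add_nonneg ha hb)] at hu
    simp [hu]
  · rw [smul_neg, ← sub_eq_add_neg, ← sub_smul] at hu ⊢
    rw [norm_smul, hv, mul_one, Real.norm_eq_abs] at hu
    rcases eq_or_eq_neg_of_abs_eq hu with h | h <;> simp [h]

lemma eq_or_eq_of_mem_arcSeg_of_inner_eq_zero {v w u c : Plane} (hv : ‖v‖ = 1) (hw : ‖w‖ = 1)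
    (hu : u ∈ arcSeg v w) (hcv : ⟪c, v⟫ ≤ 0) (hcw : ⟪c, w⟫ ≤ 0)
    (hc : ¬(⟪c, v⟫ = 0 ∧ ⟪c, w⟫ = 0)) (hcu : ⟪c, u⟫ = 0) : u = v ∨ u = w := by
  obtain ⟨hu, a, b, ha, hb, rfl⟩ := hu
  rw [inner_add_right, inner_smul_right, inner_smul_right] at hcu
  have hav := mul_nonpos_of_nonneg_of_nonpos ha hcv
  have hbw := mul_nonpos_of_nonneg_of_nonpos hb hcw
  have hav₀ : a = 0 ∨ ⟪c, v⟫ = 0 := mul_eq_zero.1 (by linarith)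
  have hbw₀ : b = 0 ∨ ⟪c, w⟫ = 0 := mul_eq_zero.1 (by linarith)
  have eq_one {s : ℝ} {z : Plane} (hs : 0 ≤ s) (hz : ‖z‖ = 1) (h : ‖s • z‖ = 1) : s = 1 := by
    rwa [norm_smul, hz, mul_one, Real.norm_of_nonneg hs] at h
  obtain rfl | rfl : a = 0 ∨ b = 0 := by tauto
  · simp only [zero_smul, zero_add] at hu ⊢
    simp [eq_one hb hw hu]
  · simp only [zero_smul, add_zero] at hu ⊢
    simp [eq_one ha hv hu]

lemma IsExtremePair.unitPolar_eq_arcSeg {o : Orientation ℝ Plane (Fin 2)} {C : Set Plane}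
    {p q : Plane} (h : IsExtremePair o C p q) :
    unitPolar C = arcSeg (-o.rightAngleRotation p) (o.rightAngleRotation q) := by
  ext ξ
  refine and_congr_right fun _ => ⟨fun hξ => ?_, ?_⟩
  · refine ⟨-⟪q, ξ⟫ / o.areaForm p q, -⟪p, ξ⟫ / o.areaForm p q,
      div_nonneg (neg_nonneg.2 (hξ q h.right_mem)) h.pos.le,
      div_nonneg (neg_nonneg.2 (hξ p h.left_mem)) h.pos.le, ?_⟩
    calc ξ = (o.areaForm p q)⁻¹ • o.areaForm p q • ξ := (inv_smul_smul₀ h.pos.ne' ξ).symm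
      _ = _ := by
        rw [areaForm_smul_eq_inner_smul_sub]
        module
  · rintro ⟨a, b, ha, hb, rfl⟩ c hc
    rw [inner_add_right, inner_smul_right, inner_smul_right, inner_neg_right,
      o.inner_rightAngleRotation_right, o.inner_rightAngleRotation_right, neg_neg,
      o.areaForm_swap c p]
    linarith [mul_nonneg ha (h.left_nonneg c hc), mul_nonneg hb (h.right_nonneg c hc)]

lemma exists_unitPolar_eq_arcSeg {C : Set Plane} {r : ℝ} {v : Plane} (hC : IsCompact C)
    (hC₂ : C.Nontrivial) (hr : ∀ c ∈ C, ‖c‖ = r) (hv : ∀ c ∈ C, ⟪c, v⟫ < 0) :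
    ∃ ξ₁ ξ₂, unitPolar C = arcSeg ξ₁ ξ₂ ∧
      {ξ ∈ unitPolar C | ∃ c ∈ C, ⟪c, ξ⟫ = 0} = {ξ₁, ξ₂} := by
  let o : Orientation ℝ Plane (Fin 2) := (EuclideanSpace.basisFun (Fin 2) ℝ).toBasis.orientation
  obtain ⟨p, q, h⟩ := exists_isExtremePair o hC hC₂ hr hv
  have ne_zero {c : Plane} (hc : c ∈ C) : c ≠ 0 := fun h₀ => by simpa [h₀] using hv c hc
  have hr₀ : 0 < r := hr p h.left_mem ▸ norm_pos_iff.2 (ne_zero h.left_mem)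
  set ξ₁ : Plane := r⁻¹ • -o.rightAngleRotation p
  set ξ₂ : Plane := r⁻¹ • o.rightAngleRotation q
  have harc : unitPolar C = arcSeg ξ₁ ξ₂ := by
    rw [h.unitPolar_eq_arcSeg, arcSeg_smul_smul (inv_pos.2 hr₀) (inv_pos.2 hr₀)]
  have norm_ξ₁ : ‖ξ₁‖ = 1 := by
    simp [ξ₁, norm_smul, hr p h.left_mem, abs_of_pos hr₀, hr₀.ne']
  have norm_ξ₂ : ‖ξ₂‖ = 1 := by
    simp [ξ₂, norm_smul, hr q h.right_mem, abs_of_pos hr₀, hr₀.ne']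
  have mem_ξ₁ : ξ₁ ∈ unitPolar C := harc ▸ left_mem_arcSeg norm_ξ₁
  have mem_ξ₂ : ξ₂ ∈ unitPolar C := harc ▸ right_mem_arcSeg norm_ξ₂
  have inner_ξ₁ (c : Plane) : ⟪c, ξ₁⟫ = r⁻¹ * o.areaForm c p := by simp [ξ₁, inner_smul_right]
  have inner_ξ₂ (c : Plane) : ⟪c, ξ₂⟫ = r⁻¹ * -o.areaForm c q := by simp [ξ₂, inner_smul_right]
  refine ⟨ξ₁, ξ₂, harc, Subset.antisymm ?_ (pair_subset ?_ ?_)⟩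
  · rintro ξ ⟨hξ, c, hc, hcξ⟩
    refine eq_or_eq_of_mem_arcSeg_of_inner_eq_zero norm_ξ₁ norm_ξ₂ (harc ▸ hξ)
      (mem_ξ₁.2 c hc) (mem_ξ₂.2 c hc) ?_ hcξ
    simpa [inner_ξ₁, inner_ξ₂, hr₀.ne'] using h.not_areaForm_eq_zero (ne_zero hc)
  · exact ⟨mem_ξ₁, p, h.left_mem, by simp [inner_ξ₁]⟩
  · exact ⟨mem_ξ₂, q, h.right_mem, by simp [inner_ξ₂]⟩

-- The hypothesis applied to the direction `ξ + η` forces `ξ` and `η` to be orthogonal to a common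
-- vector of `C`, so that `Ξ` has at most two, antipodal, elements.
lemma exists_eq_arcSeg_of_forall_exists_inner_nonneg {C Ξ : Set Plane} (hC : 0 ∉ C)
    (hΞC : Ξ ⊆ unitPolar C) (hΞ : Ξ.Nonempty) (h : ∀ v, ∃ c ∈ C, 0 ≤ ⟪c, v⟫) :
    ∃ ξ₁ ξ₂, Ξ = arcSeg ξ₁ ξ₂ ∧ {ξ ∈ Ξ | ∃ c ∈ C, ⟪c, ξ⟫ = 0} = {ξ₁, ξ₂} := by
  obtain ⟨ξ, hξ⟩ := hΞ
  have hext : {ξ ∈ Ξ | ∃ c ∈ C, ⟪c, ξ⟫ = 0} = Ξ := by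
    refine sep_eq_self_iff_mem_true.2 fun η hη => ?_
    obtain ⟨c, hc, hcη⟩ := h η
    exact ⟨c, hc, le_antisymm ((hΞC hη).2 c hc) hcη⟩
  have hpm : ∀ η ∈ Ξ, η = ξ ∨ η = -ξ := by
    intro η hη
    obtain ⟨c, hc, hsum⟩ := h (η + ξ)
    have hcη := (hΞC hη).2 c hc
    have hcξ := (hΞC hξ).2 c hc
    rw [inner_add_right] at hsum
    exact eq_or_eq_neg_of_inner_eq_zero (ne_of_mem_of_not_mem hc hC)
      ((hΞC hη).1.trans (hΞC hξ).1.symm) (by linarith) (by linarith)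
  obtain ⟨η, hη, hΞη⟩ : ∃ η, (η = ξ ∨ η = -ξ) ∧ Ξ = {ξ, η} := by
    by_cases hneg : -ξ ∈ Ξ
    · exact ⟨-ξ, .inr rfl, Subset.antisymm hpm (pair_subset hξ hneg)⟩
    · refine ⟨ξ, .inl rfl, Subset.antisymm (fun η hη => ?_) (pair_subset hξ hξ)⟩
      exact .inl ((hpm η hη).resolve_right fun h => hneg (h ▸ hη))
  exact ⟨ξ, η, hΞη.trans (arcSeg_eq_pair (hΞC hξ).1 hη).symm, hext.trans hΞη⟩

end Arc

section Contributors

variable {E : Set Plane} {ε : ℝ} {x : Plane}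

lemma eNbhd_eq_cthickening (hε : 0 < ε) : eNbhd E ε = cthickening ε E := by
  rw [eNbhd, ← thickening_eq_biUnion_ball, closure_thickening hε]

lemma le_norm_sub_of_notMem_interior_eNbhd {u y : Plane} (hu : u ∉ interior (eNbhd E ε))
    (hy : y ∈ closure E) : ε ≤ ‖y - u‖ := by
  contrapose! hu
  have hsub : thickening ε E ⊆ eNbhd E ε := by
    rw [thickening_eq_biUnion_ball]
    exact subset_closure
  refine interior_maximal hsub isOpen_thickening ?_
  rw [← thickening_closure, mem_thickening_iff]
  exact ⟨y, hy, by rwa [dist_eq_norm_sub']⟩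

lemma pos_of_mem_frontier_eNbhd (hx : x ∈ frontier (eNbhd E ε)) : 0 < ε := by
  have hxE : x ∈ eNbhd E ε := isClosed_closure.frontier_subset hx
  by_contra! hε
  simp [eNbhd, ball_eq_empty.2 hε] at hxE

lemma contributors_eq_closure_inter_sphere (hx : x ∈ frontier (eNbhd E ε)) :
    contributors E ε x = closure E ∩ sphere x ε := by
  have hε := pos_of_mem_frontier_eNbhd hx
  have hE : E ⊆ (ball x ε)ᶜ := fun y hy => by
    simpa [dist_eq_norm] using le_norm_sub_of_notMem_interior_eNbhd hx.2 (subset_closure hy)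
  ext y
  simp only [contributors, mem_ofPred_eq, mem_inter_iff, mem_sphere, dist_eq_norm]
  refine and_congr_left fun hy => ⟨fun h => h.1, fun h => ⟨h, fun hint => ?_⟩⟩
  have hy' := interior_mono hE hint
  rw [interior_compl, closure_ball x hε.ne'] at hy'
  exact hy' (by simp [dist_eq_norm, hy])

/-- The vectors from `x` to its contributors. -/
def contributorVecs (E : Set Plane) (ε : ℝ) (x : Plane) : Set Plane :=
  (fun y => y - x) '' contributors E ε x

lemma norm_of_mem_contributorVecs {c : Plane} (hc : c ∈ contributorVecs E ε x) : ‖c‖ = ε := by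
  obtain ⟨y, hy, rfl⟩ := hc
  exact hy.2

lemma isCompact_contributorVecs (hx : x ∈ frontier (eNbhd E ε)) :
    IsCompact (contributorVecs E ε x) := by
  rw [contributorVecs, contributors_eq_closure_inter_sphere hx]
  exact ((isCompact_sphere x ε).inter_left isClosed_closure).image (by fun_prop)

lemma extOutward_eq_sep_contributorVecs : extOutward E ε x =
    {ξ ∈ outwardDirs E ε x | ∃ c ∈ contributorVecs E ε x, ⟪c, ξ⟫ = 0} := by
  simp [extOutward, contributorVecs]

end Contributors

section OutwardDirs

variable {E : Set Plane} {ε : ℝ} {x : Plane}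

lemma mem_outwardDirs_iff_mapClusterPt {ξ : Plane} : ξ ∈ outwardDirs E ε x ↔
    ‖ξ‖ = 1 ∧ MapClusterPt ξ (𝓝[(eNbhd E ε)ᶜ] x) (fun u => NormedSpace.normalize (u - x)) := by
  refine and_congr_right fun _ => ⟨?_, fun h => ?_⟩
  · rintro ⟨u, hu, hux, hξ⟩
    exact .of_comp (tendsto_nhdsWithin_iff.2 ⟨hux, .of_forall hu⟩) hξ.mapClusterPt
  · obtain ⟨u, hξ, hu⟩ := h.exists_seq_tendsto
    obtain ⟨hux, hmem⟩ := tendsto_nhdsWithin_iff.1 hu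
    obtain ⟨N, hN⟩ := eventually_atTop.1 hmem
    exact ⟨fun n => u (n + N), fun n => hN _ (Nat.le_add_left N n),
      (tendsto_add_atTop_iff_nat N).2 hux, (tendsto_add_atTop_iff_nat N).2 hξ⟩

lemma isClosed_outwardDirs : IsClosed (outwardDirs E ε x) := by
  have h : outwardDirs E ε x = {ξ | ‖ξ‖ = 1} ∩ {ξ | MapClusterPt ξ (𝓝[(eNbhd E ε)ᶜ] x)
      (fun u => NormedSpace.normalize (u - x))} :=
    Set.ext fun _ => mem_outwardDirs_iff_mapClusterPt
  rw [h]
  exact (isClosed_eq continuous_norm continuous_const).inter isClosed_setOfPred_clusterPt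

lemma outwardDirs_nonempty (hx : x ∈ frontier (eNbhd E ε)) : (outwardDirs E ε x).Nonempty := by
  have hxE : x ∈ eNbhd E ε := isClosed_closure.frontier_subset hx
  have : (𝓝[(eNbhd E ε)ᶜ] x).NeBot := by
    rw [← mem_closure_iff_nhdsWithin_neBot, closure_compl]
    exact hx.2
  have hdir : ∀ᶠ u in 𝓝[(eNbhd E ε)ᶜ] x, NormedSpace.normalize (u - x) ∈ sphere (0 : Plane) 1 := by
    filter_upwards [self_mem_nhdsWithin] with u hu
    rw [mem_sphere_zero_iff_norm, NormedSpace.norm_normalize_eq_one_iff, sub_ne_zero]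
    exact fun h => hu (h ▸ hxE)
  obtain ⟨ξ, hξ, hcluster⟩ :=
    (isCompact_sphere (0 : Plane) 1).exists_mapClusterPt_of_frequently hdir.frequently
  exact ⟨ξ, mem_outwardDirs_iff_mapClusterPt.2 ⟨mem_sphere_zero_iff_norm.1 hξ, hcluster⟩⟩

lemma outwardDirs_subset_unitPolar :
    outwardDirs E ε x ⊆ unitPolar (contributorVecs E ε x) := by
  rintro ξ ⟨hξ, u, hu, hux, hdir⟩
  refine ⟨hξ, forall_mem_image.2 fun y hy => ?_⟩
  have hle (n : ℕ) : ⟪y - x, NormedSpace.normalize (u n - x)⟫ ≤ ‖u n - x‖ / 2 := by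
    refine inner_normalize_le_half_norm ?_
    rw [sub_sub_sub_cancel_right, hy.2]
    exact le_norm_sub_of_notMem_interior_eNbhd (fun h => hu n (interior_subset h)) hy.1.1
  have hlim : Tendsto (fun n => ‖u n - x‖ / 2) atTop (𝓝 0) := by
    simpa using ((hux.sub_const x).norm.div_const 2)
  exact le_of_tendsto_of_tendsto' (tendsto_const_nhds.inner hdir) hlim hle

lemma normalize_mem_outwardDirs (hx : x ∈ frontier (eNbhd E ε)) {v : Plane} (hv₀ : v ≠ 0)
    (hv : ∀ c ∈ contributorVecs E ε x, ⟪c, v⟫ < 0) :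
    NormedSpace.normalize v ∈ outwardDirs E ε x := by
  have hε := pos_of_mem_frontier_eNbhd hx
  have hray : ∀ᶠ t : ℝ in 𝓝[>] 0, x + t • v ∉ eNbhd E ε := by
    rw [eNbhd_eq_cthickening hε]
    refine eventually_notMem_cthickening hε.le
      (fun y hy => le_norm_sub_of_notMem_interior_eNbhd hx.2 hy) fun y hy hyx => ?_
    refine hv _ (mem_image_of_mem _ ?_)
    rw [contributors_eq_closure_inter_sphere hx]
    exact ⟨hy, by rwa [mem_sphere, dist_eq_norm]⟩
  have hto : Tendsto (fun t : ℝ => x + t • v) (𝓝[>] 0) (𝓝[(eNbhd E ε)ᶜ] x) := by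
    refine tendsto_nhdsWithin_iff.2 ⟨?_, hray⟩
    exact (Continuous.tendsto' (by fun_prop) 0 x (by simp)).mono_left nhdsWithin_le_nhds
  refine mem_outwardDirs_iff_mapClusterPt.2
    ⟨NormedSpace.norm_normalize hv₀, .of_comp hto (Tendsto.mapClusterPt ?_)⟩
  refine tendsto_const_nhds.congr' ?_
  filter_upwards [self_mem_nhdsWithin] with t ht
  simp [NormedSpace.normalize_smul_of_pos ht]

lemma outwardDirs_eq_unitPolar (hx : x ∈ frontier (eNbhd E ε)) {v : Plane}
    (hv : ∀ c ∈ contributorVecs E ε x, ⟪c, v⟫ < 0) :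
    outwardDirs E ε x = unitPolar (contributorVecs E ε x) := by
  refine outwardDirs_subset_unitPolar.antisymm fun ξ hξ => ?_
  have hadd : Tendsto (fun t : ℝ => ξ + t • v) (𝓝[>] 0) (𝓝 ξ) :=
    (Continuous.tendsto' (by fun_prop) 0 ξ (by simp)).mono_left nhdsWithin_le_nhds
  have hξ₀ : ξ ≠ 0 := norm_ne_zero_iff.1 (by simp [hξ.1])
  have hlim : Tendsto (fun t : ℝ => NormedSpace.normalize (ξ + t • v)) (𝓝[>] 0) (𝓝 ξ) := by
    have h := (hadd.norm.inv₀ (norm_ne_zero_iff.2 hξ₀)).smul hadd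
    rwa [hξ.1, inv_one, one_smul] at h
  refine isClosed_outwardDirs.mem_of_tendsto hlim ?_
  filter_upwards [self_mem_nhdsWithin, hadd.eventually_ne hξ₀] with t ht hne
  refine normalize_mem_outwardDirs hx hne fun c hc => ?_
  rw [inner_add_right, inner_smul_right]
  linarith [hξ.2 c hc, mul_neg_of_pos_of_neg (mem_Ioi.1 ht) (hv c hc)]

end OutwardDirs

lemma outwardDirs_eq_of_contributors_eq_singleton {E : Set Plane} {ε : ℝ} {x y : Plane}
    (hx : x ∈ frontier (eNbhd E ε)) (hy : contributors E ε x = {y}) :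
    outwardDirs E ε x = {ξ : Plane | ‖ξ‖ = 1 ∧ ⟪y - x, ξ⟫ ≤ 0} := by
  have hvecs : contributorVecs E ε x = {y - x} := by simp [contributorVecs, hy]
  have hyx : 0 < ‖y - x‖ := by
    rw [norm_of_mem_contributorVecs (hvecs ▸ mem_singleton _)]
    exact pos_of_mem_frontier_eNbhd hx
  rw [outwardDirs_eq_unitPolar hx (v := -(y - x)), hvecs]
  · simp [unitPolar]
  · rw [hvecs]
    rintro _ rfl
    rw [inner_neg_right, real_inner_self_eq_norm_sq]
    exact neg_neg_of_pos (by positivity)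

theorem structure_of_outwardDirs_general (E : Set Plane) {ε : ℝ} (x : Plane)
    (hx : x ∈ frontier (eNbhd E ε)) :
    (∀ y, contributors E ε x = {y} →
      outwardDirs E ε x = {ξ : Plane | ‖ξ‖ = 1 ∧ ⟪y - x, ξ⟫ ≤ 0}) ∧
    ((∃ y₁ ∈ contributors E ε x, ∃ y₂ ∈ contributors E ε x, y₁ ≠ y₂) →
      ∃ ξ₁ ξ₂, ξ₁ ∈ extOutward E ε x ∧ ξ₂ ∈ extOutward E ε x ∧
        outwardDirs E ε x = arcSeg ξ₁ ξ₂ ∧ extOutward E ε x = {ξ₁, ξ₂}) := by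
  refine ⟨fun y hy => outwardDirs_eq_of_contributors_eq_singleton hx hy, fun h₂ => ?_⟩
  obtain ⟨ξ₁, ξ₂, harc, hext⟩ :
      ∃ ξ₁ ξ₂, outwardDirs E ε x = arcSeg ξ₁ ξ₂ ∧ extOutward E ε x = {ξ₁, ξ₂} := by
    rw [extOutward_eq_sep_contributorVecs]
    by_cases hv : ∃ v, ∀ c ∈ contributorVecs E ε x, ⟪c, v⟫ < 0
    · obtain ⟨v, hv⟩ := hv
      rw [outwardDirs_eq_unitPolar hx hv]
      exact exists_unitPolar_eq_arcSeg (isCompact_contributorVecs hx)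
        (Set.Nontrivial.image h₂ sub_left_injective)
        (fun c => norm_of_mem_contributorVecs) hv
    · push Not at hv
      refine exists_eq_arcSeg_of_forall_exists_inner_nonneg (fun h₀ => ?_)
        outwardDirs_subset_unitPolar (outwardDirs_nonempty hx) hv
      exact (pos_of_mem_frontier_eNbhd hx).ne (by simpa using norm_of_mem_contributorVecs h₀)
  exact ⟨ξ₁, ξ₂, by simp [hext], by simp [hext], harc, hext⟩


/-- Structure of sets of outward directions: (i) if `x` has a unique contributor `y`, the
outward directions are exactly the unit vectors with `⟪y - x, ξ⟫ ≤ 0`; (ii) if `x` has at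
least two contributors, the outward directions form a geodesic arc-segment `[ξ₁, ξ₂]`
between the only two extremal outward directions (possibly `ξ₁ = ξ₂`). -/
theorem structure_of_outwardDirs (E : Set Plane) (hE : IsCompact E) {ε : ℝ} (hε : 0 < ε)
    (x : Plane) (hx : x ∈ frontier (eNbhd E ε)) :
    (∀ y, contributors E ε x = {y} →
      outwardDirs E ε x = {ξ : Plane | ‖ξ‖ = 1 ∧ ⟪y - x, ξ⟫ ≤ 0}) ∧
    ((∃ y₁ ∈ contributors E ε x, ∃ y₂ ∈ contributors E ε x, y₁ ≠ y₂) →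
      ∃ ξ₁ ξ₂, ξ₁ ∈ extOutward E ε x ∧ ξ₂ ∈ extOutward E ε x ∧
        outwardDirs E ε x = arcSeg ξ₁ ξ₂ ∧ extOutward E ε x = {ξ₁, ξ₂}) :=
  structure_of_outwardDirs_general E x hx

end
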